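/- arXiv:1909.04266 — 2 statements merged into one kernel-verified Lean document; each statement's English description precedes it below -/
import Mathlib

section
/- Let γ > 0, let M ∈ ℝ_{≥0}^{n×s} be a cost matrix, and let p ∈ Σ_n have strictly positive entries. Let K = e^{−M/γ} entrywise, and for g ∈ ℝ^s let α = e^{g/γ} entrywise. Then the Legendre–Fenchel conjugate of H_p := q ↦ W_γ(p,q) satisfies, for every g ∈ ℝ^s, H_p*(g) := sup_{q ∈ Σ_s} (⟨g,q⟩ − W_γ(p,q)) = γ ( h(p) + ⟨p, log(Kα)⟩ ), where h(p) = −Σ_i p_i log p_i and log is applied entrywise to the (strictly positive) vector Kα. -/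
open Finset

noncomputable section

/-- The simplex Σ_n: nonnegative vectors in ℝ^n summing to 1. -/
def simplex (n : ℕ) : Set (Fin n → ℝ) :=
  {p | (∀ i, 0 ≤ p i) ∧ ∑ i, p i = 1}

/-- The transport polytope U(p,q): nonnegative n×s matrices with row sums p
and column sums q. -/
def transportPolytope {n s : ℕ} (p : Fin n → ℝ) (q : Fin s → ℝ) :
    Set (Matrix (Fin n) (Fin s) ℝ) :=
  {T | (∀ i j, 0 ≤ T i j) ∧ (∀ i, ∑ j, T i j = p i) ∧ (∀ j, ∑ i, T i j = q j)}

/-- Frobenius inner product ⟨T,M⟩ = Σ_{i,j} T_{ij} M_{ij}. -/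
def frob {n s : ℕ} (T M : Matrix (Fin n) (Fin s) ℝ) : ℝ :=
  ∑ i, ∑ j, T i j * M i j

/-- The entropy h(T) = −Σ_{i,j} T_{ij} log T_{ij} (Real.log 0 = 0, so 0 log 0 = 0). -/
def entropy {n s : ℕ} (T : Matrix (Fin n) (Fin s) ℝ) : ℝ :=
  -∑ i, ∑ j, T i j * Real.log (T i j)

/-- The Wasserstein distance W(p,q) = inf_{T ∈ U(p,q)} ⟨T,M⟩. -/
def W {n s : ℕ} (M : Matrix (Fin n) (Fin s) ℝ) (p : Fin n → ℝ) (q : Fin s → ℝ) : ℝ :=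
  sInf ((fun T => frob T M) '' transportPolytope p q)

/-- The smoothed Wasserstein distance W_γ(p,q) = inf_{T ∈ U(p,q)} ⟨T,M⟩ − γ h(T). -/
def Wsmooth {n s : ℕ} (γ : ℝ) (M : Matrix (Fin n) (Fin s) ℝ)
    (p : Fin n → ℝ) (q : Fin s → ℝ) : ℝ :=
  sInf ((fun T => frob T M - γ * entropy T) '' transportPolytope p q)

/-- K = e^{−M/γ}, entrywise. -/
def Kmat {n s : ℕ} (γ : ℝ) (M : Matrix (Fin n) (Fin s) ℝ) : Matrix (Fin n) (Fin s) ℝ :=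
  fun i j => Real.exp (-M i j / γ)

/-- Legendre–Fenchel conjugate H_p*(g) = sup_{q ∈ Σ_s} (⟨g,q⟩ − W_γ(p,q)). -/
def Hstar {n s : ℕ} (γ : ℝ) (M : Matrix (Fin n) (Fin s) ℝ)
    (p : Fin n → ℝ) (g : Fin s → ℝ) : ℝ :=
  sSup ((fun q => (∑ j, g j * q j) - Wsmooth γ M p q) '' simplex s)

/-- The gradient formula ∇H_p*(g) = α ⊙ Kᵀ (p ⊘ Kα), where α = e^{g/γ} entrywise. -/
def HstarGrad {n s : ℕ} (γ : ℝ) (M : Matrix (Fin n) (Fin s) ℝ)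
    (p : Fin n → ℝ) (g : Fin s → ℝ) : Fin s → ℝ :=
  fun j => Real.exp (g j / γ) *
    Matrix.mulVec (Kmat γ M).transpose
      (fun i => p i / Matrix.mulVec (Kmat γ M) (fun j' => Real.exp (g j' / γ)) i) j

/-!
For a transport plan `T` with second marginal `q`, the quantity `⟨g, q⟩ - (⟨T, M⟩ - γ h(T))` equals
`γ ∑ i, ∑ j, T i j * ((g j - M i j) / γ - log (T i j))`, in which `q` no longer appears. Maximising
over `q` and `T` together thus leaves only the row constraints `∑ j, T i j = p i`, and the problem
splits into one Gibbs variational problem per row: its maximum is `p i` times a log-sum-exp minus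
`p i * log (p i)`, attained when the row is `p i` times a softmax.
-/

section GibbsVariationalPrinciple

variable {ι : Type*} [Fintype ι]

lemma sum_mul_log_sub_log_le_negMulLog_sum {w t : ι → ℝ} (hw : ∀ j, 0 < w j)
    (hw_sum : ∑ j, w j = 1) (ht : ∀ j, 0 ≤ t j) :
    ∑ j, t j * (Real.log (w j) - Real.log (t j)) ≤ Real.negMulLog (∑ j, t j) := by
  have jensen := Real.concaveOn_negMulLog.le_map_sum (t := univ) (w := w)
    (p := fun j => t j / w j) (fun j _ => (hw j).le) hw_sum
    (fun j _ => div_nonneg (ht j) (hw j).le)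
  simp only [smul_eq_mul, mul_div_cancel₀ _ (hw _).ne'] at jensen
  refine (sum_congr rfl fun j _ => ?_).trans_le jensen
  rcases eq_or_ne (t j) 0 with htj | htj
  · simp [htj]
  · rw [Real.negMulLog, Real.log_div htj (hw j).ne']
    have := (hw j).ne'
    field_simp
    ring

/-- The Gibbs distribution with weights proportional to `exp (c j)`: the maximiser in the Gibbs
variational principle. -/
def softmax (c : ι → ℝ) (j : ι) : ℝ :=
  Real.exp (c j) / ∑ k, Real.exp (c k)

lemma sum_exp_pos [Nonempty ι] (c : ι → ℝ) : 0 < ∑ j, Real.exp (c j) :=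
  sum_pos (fun j _ => Real.exp_pos (c j)) univ_nonempty

lemma softmax_pos (c : ι → ℝ) (j : ι) : 0 < softmax c j := by
  have : Nonempty ι := ⟨j⟩
  exact div_pos (Real.exp_pos _) (sum_exp_pos c)

lemma sum_softmax [Nonempty ι] (c : ι → ℝ) : ∑ j, softmax c j = 1 := by
  simp only [softmax, ← sum_div]
  exact div_self (sum_exp_pos c).ne'

lemma log_softmax (c : ι → ℝ) (j : ι) :
    Real.log (softmax c j) = c j - Real.log (∑ k, Real.exp (c k)) := by
  have : Nonempty ι := ⟨j⟩
  rw [softmax, Real.log_div (Real.exp_pos _).ne' (sum_exp_pos c).ne', Real.log_exp]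

theorem sum_mul_sub_log_le (c : ι → ℝ) {t : ι → ℝ} (ht : ∀ j, 0 ≤ t j) :
    ∑ j, t j * (c j - Real.log (t j)) ≤
      (∑ j, t j) * (Real.log (∑ j, Real.exp (c j)) - Real.log (∑ j, t j)) := by
  cases isEmpty_or_nonempty ι
  · simp
  have h := sum_mul_log_sub_log_le_negMulLog_sum (softmax_pos c) (sum_softmax c) ht
  have split : ∀ j, t j * (Real.log (softmax c j) - Real.log (t j)) =
      t j * (c j - Real.log (t j)) - t j * Real.log (∑ k, Real.exp (c k)) := fun j => by
    rw [log_softmax]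
    ring
  rw [sum_congr rfl fun j _ => split j, sum_sub_distrib, ← sum_mul, Real.negMulLog] at h
  linarith

theorem sum_mul_sub_log_mul_softmax [Nonempty ι] (c : ι → ℝ) (P : ℝ) :
    ∑ j, P * softmax c j * (c j - Real.log (P * softmax c j)) =
      P * (Real.log (∑ j, Real.exp (c j)) - Real.log P) := by
  rcases eq_or_ne P 0 with rfl | hP
  · simp
  have cancel : ∀ j, c j - Real.log (P * softmax c j) =
      Real.log (∑ k, Real.exp (c k)) - Real.log P := fun j => by
    rw [Real.log_mul hP (softmax_pos c j).ne', log_softmax]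
    ring
  simp only [cancel, ← sum_mul, ← mul_sum, sum_softmax, mul_one]

end GibbsVariationalPrinciple

section Transport

variable {n s : ℕ} {γ : ℝ} {M T : Matrix (Fin n) (Fin s) ℝ} {p : Fin n → ℝ} {q : Fin s → ℝ}

lemma transportPolytope_nonempty (hp : p ∈ simplex n) (hq : q ∈ simplex s) :
    (transportPolytope p q).Nonempty := by
  refine ⟨fun i j => p i * q j, fun i j => mul_nonneg (hp.1 i) (hq.1 j), fun i => ?_, fun j => ?_⟩
  · rw [← mul_sum, hq.2, mul_one]
  · rw [← sum_mul, hp.2, one_mul]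

lemma mem_simplex_of_mem_transportPolytope (hp : p ∈ simplex n) (hT : T ∈ transportPolytope p q) :
    q ∈ simplex s := by
  obtain ⟨nonneg, row_sum, col_sum⟩ := hT
  refine ⟨fun j => col_sum j ▸ sum_nonneg fun i _ => nonneg i j, ?_⟩
  simp only [← col_sum]
  rw [sum_comm]
  simp only [row_sum, hp.2]

lemma sum_mul_sub_frob_sub_entropy (hγ : γ ≠ 0) (g : Fin s → ℝ)
    (col_sum : ∀ j, ∑ i, T i j = q j) :
    (∑ j, g j * q j) - (frob T M - γ * entropy T) =
      γ * ∑ i, ∑ j, T i j * ((g j - M i j) / γ - Real.log (T i j)) := by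
  have pairing : ∑ j, g j * q j = ∑ i, ∑ j, g j * T i j := by
    rw [sum_comm]
    simp only [← col_sum, mul_sum]
  rw [pairing, frob, entropy]
  simp only [mul_neg, sub_neg_eq_add, mul_sum, ← sum_add_distrib, ← sum_sub_distrib]
  refine sum_congr rfl fun i _ => sum_congr rfl fun j _ => ?_
  field_simp
  ring

lemma mulVec_Kmat_exp (γ : ℝ) (M : Matrix (Fin n) (Fin s) ℝ) (g : Fin s → ℝ) (i : Fin n) :
    Matrix.mulVec (Kmat γ M) (fun j => Real.exp (g j / γ)) i =
      ∑ j, Real.exp ((g j - M i j) / γ) := by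
  simp only [Matrix.mulVec, dotProduct, Kmat, ← Real.exp_add, ← add_div, neg_add_eq_sub]

/-- The value `γ (h(p) + ⟨p, log(Kα)⟩)` with `α = e^{g/γ}`, to be identified with `H_p*(g)`. -/
def conjugateValue (γ : ℝ) (M : Matrix (Fin n) (Fin s) ℝ) (p : Fin n → ℝ) (g : Fin s → ℝ) : ℝ :=
  γ * ((-∑ i, p i * Real.log (p i)) +
    ∑ i, p i * Real.log (Matrix.mulVec (Kmat γ M) (fun j => Real.exp (g j / γ)) i))

lemma conjugateValue_eq_sum (γ : ℝ) (M : Matrix (Fin n) (Fin s) ℝ) (p : Fin n → ℝ)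
    (g : Fin s → ℝ) :
    conjugateValue γ M p g =
      γ * ∑ i, p i * (Real.log (∑ j, Real.exp ((g j - M i j) / γ)) - Real.log (p i)) := by
  simp only [conjugateValue, mulVec_Kmat_exp, mul_sub, sum_sub_distrib]
  ring

/-- The optimal transport plan for the potential `g`: its `i`-th row distributes the mass `p i`
according to the Gibbs distribution of `(g - M i) / γ`. -/
def gibbsPlan (γ : ℝ) (M : Matrix (Fin n) (Fin s) ℝ) (p : Fin n → ℝ) (g : Fin s → ℝ) :
    Matrix (Fin n) (Fin s) ℝ :=
  fun i j => p i * softmax (fun k => (g k - M i k) / γ) j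

lemma gibbsPlan_mem_transportPolytope [NeZero s] (γ : ℝ) (M : Matrix (Fin n) (Fin s) ℝ)
    (hp : ∀ i, 0 ≤ p i) (g : Fin s → ℝ) :
    gibbsPlan γ M p g ∈ transportPolytope p (fun j => ∑ i, gibbsPlan γ M p g i j) := by
  refine ⟨fun i j => mul_nonneg (hp i) (softmax_pos _ j).le, fun i => ?_, fun j => rfl⟩
  simp only [gibbsPlan, ← mul_sum, sum_softmax, mul_one]

lemma sum_mul_sub_frob_sub_entropy_le_conjugateValue (hγ : 0 < γ) (g : Fin s → ℝ)
    (hT : T ∈ transportPolytope p q) :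
    (∑ j, g j * q j) - (frob T M - γ * entropy T) ≤ conjugateValue γ M p g := by
  obtain ⟨nonneg, row_sum, col_sum⟩ := hT
  rw [sum_mul_sub_frob_sub_entropy hγ.ne' g col_sum, conjugateValue_eq_sum]
  gcongr with i
  rw [← row_sum i]
  exact sum_mul_sub_log_le _ (nonneg i)

lemma sum_mul_sub_frob_sub_entropy_gibbsPlan [NeZero s] (hγ : γ ≠ 0)
    (M : Matrix (Fin n) (Fin s) ℝ) (p : Fin n → ℝ) (g : Fin s → ℝ) :
    (∑ j, g j * ∑ i, gibbsPlan γ M p g i j) -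
        (frob (gibbsPlan γ M p g) M - γ * entropy (gibbsPlan γ M p g)) =
      conjugateValue γ M p g := by
  rw [sum_mul_sub_frob_sub_entropy hγ g fun _ => rfl, conjugateValue_eq_sum]
  simp only [gibbsPlan, sum_mul_sub_log_mul_softmax]

lemma bddBelow_frob_sub_entropy (hγ : 0 < γ) (M : Matrix (Fin n) (Fin s) ℝ) (p : Fin n → ℝ)
    (q : Fin s → ℝ) :
    BddBelow ((fun T => frob T M - γ * entropy T) '' transportPolytope p q) := by
  refine ⟨-conjugateValue γ M p 0, ?_⟩
  rintro _ ⟨T, hT, rfl⟩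
  have h := sum_mul_sub_frob_sub_entropy_le_conjugateValue (M := M) hγ 0 hT
  simp only [Pi.zero_apply, zero_mul, sum_const_zero, zero_sub] at h
  exact neg_le.mp h

lemma Wsmooth_le (hγ : 0 < γ) (hT : T ∈ transportPolytope p q) :
    Wsmooth γ M p q ≤ frob T M - γ * entropy T :=
  csInf_le (bddBelow_frob_sub_entropy hγ M p q) (Set.mem_image_of_mem _ hT)

lemma sum_mul_sub_Wsmooth_le_conjugateValue (hγ : 0 < γ) (M : Matrix (Fin n) (Fin s) ℝ)
    (hp : p ∈ simplex n) (hq : q ∈ simplex s) (g : Fin s → ℝ) :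
    (∑ j, g j * q j) - Wsmooth γ M p q ≤ conjugateValue γ M p g := by
  refine sub_le_comm.mp (le_csInf ((transportPolytope_nonempty hp hq).image _) ?_)
  rintro _ ⟨T, hT, rfl⟩
  exact sub_le_comm.mp (sum_mul_sub_frob_sub_entropy_le_conjugateValue hγ g hT)

lemma conjugateValue_le_sum_mul_sub_Wsmooth_gibbsPlan [NeZero s] (hγ : 0 < γ)
    (M : Matrix (Fin n) (Fin s) ℝ) (hp : ∀ i, 0 ≤ p i) (g : Fin s → ℝ) :
    conjugateValue γ M p g ≤ (∑ j, g j * ∑ i, gibbsPlan γ M p g i j) -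
      Wsmooth γ M p (fun j => ∑ i, gibbsPlan γ M p g i j) := by
  rw [← sum_mul_sub_frob_sub_entropy_gibbsPlan hγ.ne' M p g]
  exact sub_le_sub_left (Wsmooth_le hγ (gibbsPlan_mem_transportPolytope γ M hp g)) _

end Transport

theorem Hstar_closed_form_general {n s : ℕ} [NeZero s] {γ : ℝ} (hγ : 0 < γ)
    (M : Matrix (Fin n) (Fin s) ℝ) {p : Fin n → ℝ} (hp : p ∈ simplex n) (g : Fin s → ℝ) :
    IsGreatest ((fun q => (∑ j, g j * q j) - Wsmooth γ M p q) '' simplex s)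
      (γ * ((-∑ i, p i * Real.log (p i)) +
        ∑ i, p i *
          Real.log (Matrix.mulVec (Kmat γ M) (fun j => Real.exp (g j / γ)) i))) := by
  have upper {q : Fin s → ℝ} (hq : q ∈ simplex s) :=
    sum_mul_sub_Wsmooth_le_conjugateValue hγ M hp hq g
  have marginal_mem : (fun j => ∑ i, gibbsPlan γ M p g i j) ∈ simplex s :=
    mem_simplex_of_mem_transportPolytope hp (gibbsPlan_mem_transportPolytope γ M hp.1 g)
  refine ⟨⟨_, marginal_mem, ?_⟩, Set.forall_mem_image.mpr fun q hq => upper hq⟩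
  exact (upper marginal_mem).antisymm
    (conjugateValue_le_sum_mul_sub_Wsmooth_gibbsPlan hγ M hp.1 g)

/-- closed form of the Legendre–Fenchel conjugate of H_p = W_γ(p,·):
H_p*(g) = γ (h(p) + ⟨p, log(Kα)⟩), where K = e^{−M/γ} and α = e^{g/γ}. -/
theorem Hstar_closed_form
    (n s : ℕ) (hn : 0 < n) (hs : 0 < s)
    (γ : ℝ) (hγ : 0 < γ)
    (M : Matrix (Fin n) (Fin s) ℝ) (hM : ∀ i j, 0 ≤ M i j)
    (p : Fin n → ℝ) (hp : p ∈ simplex n) (hp' : ∀ i, 0 < p i)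
    (g : Fin s → ℝ) :
    Hstar γ M p g =
      γ * ((-∑ i, p i * Real.log (p i)) +
        ∑ i, p i *
          Real.log (Matrix.mulVec (Kmat γ M) (fun j => Real.exp (g j / γ)) i)) := by
  have : NeZero s := ⟨hs.ne'⟩
  exact (Hstar_closed_form_general hγ M hp g).csSup_eq
end
end

section
/- Let γ > 0, let M ∈ ℝ_{≥0}^{n×s}, and let p ∈ Σ_n have strictly positive entries. Then the function q ↦ W_γ(p,q) is differentiable (in the sense of the relative differential along the affine hull of Σ_s) at every q in the relative interior of Σ_s, i.e. at every q ∈ Σ_s with strictly positive entries. -/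
open Finset

noncomputable section

/-!
The function `q ↦ W_γ(p, q)` is convex, being the partial infimum of a convex function over a set
with convex graph. A convex function that is touched from above at a point by a differentiable
function is differentiable there, since reflecting through the point turns the upper bound into a
lower one. Here the touching function is the cost of the plan `T + p ⊗ (x - q)`, where `T` is an
optimal plan at `q`: it is differentiable because `T` is positive wherever `p` is, the entropy
having infinite slope at the boundary of the polytope.
-/

open Filter Topology Matrix

section ConvexAnalysis

theorem convexOn_sInf_image {E F : Type*} [AddCommMonoid E] [Module ℝ E] [AddCommMonoid F]
    [Module ℝ F] {U : E → Set F} {K : Set F} {Φ : F → ℝ} (hΦ : ConvexOn ℝ K Φ)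
    (hU : Convex ℝ {z : E × F | z.2 ∈ U z.1}) (hUK : ∀ x, U x ⊆ K)
    (hbdd : ∀ x, BddBelow (Φ '' U x)) :
    ConvexOn ℝ {x | (U x).Nonempty} fun x => sInf (Φ '' U x) := by
  have hmem : ∀ ⦃x y : E⦄ ⦃t u : F⦄ ⦃a b : ℝ⦄, t ∈ U x → u ∈ U y → 0 ≤ a → 0 ≤ b → a + b = 1 →
      a • t + b • u ∈ U (a • x + b • y) := fun x y t u _ _ ht hu ha hb hab =>
    hU (x := (x, t)) ht (y := (y, u)) hu ha hb hab
  refine ⟨fun x ⟨t, ht⟩ y ⟨u, hu⟩ a b ha hb hab => ⟨_, hmem ht hu ha hb hab⟩,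
    fun x hx y hy a b ha hb hab => ?_⟩
  have hx' := (hx.image Φ).smul_set (a := a)
  have hy' := (hy.image Φ).smul_set (a := b)
  rw [← Real.sInf_smul_of_nonneg ha, ← Real.sInf_smul_of_nonneg hb,
    ← csInf_add hx' ((hbdd x).smul_of_nonneg ha) hy' ((hbdd y).smul_of_nonneg hb)]
  refine le_csInf (hx'.add hy') ?_
  rintro _ ⟨_, ⟨_, ⟨t, ht, rfl⟩, rfl⟩, _, ⟨_, ⟨u, hu, rfl⟩, rfl⟩, rfl⟩
  calc sInf (Φ '' U (a • x + b • y))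
      ≤ Φ (a • t + b • u) := csInf_le (hbdd _) ⟨_, hmem ht hu ha hb hab, rfl⟩
    _ ≤ a • Φ t + b • Φ u := hΦ.2 (hUK x ht) (hUK y hu) ha hb hab

theorem two_mul_le_add_pointReflection_of_convexOn {E : Type*} [AddCommGroup E] [Module ℝ E]
    {f : E → ℝ} {C : Set E} (hf : ConvexOn ℝ C f) {x₀ x : E} (hx : x ∈ C)
    (hx' : Equiv.pointReflection x₀ x ∈ C) :
    2 * f x₀ ≤ f x + f (Equiv.pointReflection x₀ x) := by
  have hmid : (1 / 2 : ℝ) • x + (1 / 2 : ℝ) • Equiv.pointReflection x₀ x = x₀ := by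
    rw [Equiv.pointReflection_apply, vsub_eq_sub, vadd_eq_add]
    module
  have hle := hf.2 hx hx' one_half_pos.le one_half_pos.le (add_halves (1 : ℝ))
  rw [hmid, smul_eq_mul, smul_eq_mul] at hle
  linarith

theorem tendsto_pointReflection_nhdsWithin {E : Type*} [AddCommGroup E] [TopologicalSpace E]
    [IsTopologicalAddGroup E] {A : Set E} {x₀ : E}
    (hA : Set.MapsTo (Equiv.pointReflection x₀) A A) :
    Tendsto (Equiv.pointReflection x₀) (𝓝[A] x₀) (𝓝[A] x₀) := by
  have hcont : Continuous (Equiv.pointReflection x₀) := by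
    simp only [funext (Equiv.pointReflection_apply x₀), vsub_eq_sub, vadd_eq_add]
    fun_prop
  simpa using hcont.continuousWithinAt.tendsto_nhdsWithin hA (x := x₀)

theorem hasFDerivWithinAt_of_convexOn_of_eventuallyLE {E : Type*} [NormedAddCommGroup E]
    [NormedSpace ℝ E] {f g : E → ℝ} {g' : E →L[ℝ] ℝ} {C A : Set E} {x₀ : E}
    (hf : ConvexOn ℝ C f) (hC : C ∈ 𝓝[A] x₀) (hA : Set.MapsTo (Equiv.pointReflection x₀) A A)
    (hg : HasFDerivWithinAt g g' A x₀) (hfg : f ≤ᶠ[𝓝[A] x₀] g) (heq : f x₀ = g x₀) :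
    HasFDerivWithinAt f g' A x₀ := by
  set r := Equiv.pointReflection x₀
  have hr (x : E) : r x - x₀ = -(x - x₀) := by
    simp [r, Equiv.pointReflection_apply]
  have hr_tendsto : Tendsto r (𝓝[A] x₀) (𝓝[A] x₀) := tendsto_pointReflection_nhdsWithin hA
  let err : E → ℝ := fun x => g x - g x₀ - g' (x - x₀)
  have herr : err =o[𝓝[A] x₀] fun x => x - x₀ := hg.isLittleO
  have herr_r : (fun x => err (r x)) =o[𝓝[A] x₀] fun x => x - x₀ := by
    simpa only [Function.comp_def, hr, Asymptotics.isLittleO_neg_right] using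
      herr.comp_tendsto hr_tendsto
  refine .of_isLittleO (Asymptotics.IsBigO.trans_isLittleO (.of_norm_eventuallyLE ?_)
    (herr.abs_left.add herr_r.abs_left))
  filter_upwards [hC, hr_tendsto hC, hfg, hr_tendsto.eventually hfg] with x hx hrx hle hrle
  have hupper : f x - f x₀ - g' (x - x₀) ≤ err x := by
    simp only [err]
    linarith
  have hlower : -err (r x) ≤ f x - f x₀ - g' (x - x₀) := by
    have hmid : 2 * f x₀ ≤ f x + f (r x) := two_mul_le_add_pointReflection_of_convexOn hf hx hrx
    simp only [err, hr, map_neg]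
    linarith
  rw [Real.norm_eq_abs, abs_le]
  exact ⟨by linarith [le_abs_self (err (r x)), abs_nonneg (err x)],
    hupper.trans (by linarith [le_abs_self (err x), abs_nonneg (err (r x))])⟩

end ConvexAnalysis

variable {n s : ℕ}

theorem frob_add (T P M : Matrix (Fin n) (Fin s) ℝ) : frob (T + P) M = frob T M + frob P M := by
  simp only [frob, Matrix.add_apply, add_mul, sum_add_distrib]

theorem frob_smul (a : ℝ) (T M : Matrix (Fin n) (Fin s) ℝ) : frob (a • T) M = a * frob T M := by
  simp only [frob, Matrix.smul_apply, smul_eq_mul, mul_assoc, mul_sum]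

theorem entropy_eq_sum_negMulLog (T : Matrix (Fin n) (Fin s) ℝ) :
    entropy T = ∑ z : Fin n × Fin s, Real.negMulLog (T z.1 z.2) := by
  simp only [entropy, Real.negMulLog, neg_mul, sum_neg_distrib, Fintype.sum_prod_type]

theorem concaveOn_entropy :
    ConcaveOn ℝ {T : Matrix (Fin n) (Fin s) ℝ | ∀ i j, 0 ≤ T i j} entropy := by
  refine ⟨fun T hT P hP a b ha hb _ i j =>
    add_nonneg (mul_nonneg ha (hT i j)) (mul_nonneg hb (hP i j)), fun T hT P hP a b ha hb hab => ?_⟩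
  simp only [entropy_eq_sum_negMulLog, smul_sum, ← sum_add_distrib]
  exact sum_le_sum fun z _ => Real.concaveOn_negMulLog.2 (hT z.1 z.2) (hP z.1 z.2) ha hb hab

-- The extra term `P i j * negMulLog t` has infinite slope at `t = 0`.
theorem le_entropy_of_apply_eq_zero {T P : Matrix (Fin n) (Fin s) ℝ} (hT : ∀ i j, 0 ≤ T i j)
    (hP : ∀ i j, 0 ≤ P i j) {i : Fin n} {j : Fin s} (hij : T i j = 0) {t : ℝ} (ht₀ : 0 ≤ t)
    (ht₁ : t ≤ 1) :
    (1 - t) * entropy T + t * entropy P + P i j * Real.negMulLog t ≤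
      entropy ((1 - t) • T + t • P) := by
  have hsingle : P i j * Real.negMulLog t =
      ∑ z : Fin n × Fin s, if z = (i, j) then P i j * Real.negMulLog t else 0 := by simp
  rw [hsingle]
  simp only [entropy_eq_sum_negMulLog, mul_sum, ← sum_add_distrib]
  refine sum_le_sum fun z _ => ?_
  by_cases hz : z = (i, j)
  · simp [hz, hij, Real.negMulLog_mul, add_comm]
  · simpa [hz] using Real.concaveOn_negMulLog.2 (hT z.1 z.2) (hP z.1 z.2) (sub_nonneg.2 ht₁) ht₀
      (sub_add_cancel 1 t)

/-- The objective `⟨T, M⟩ - γ h(T)` minimized in the definition of `Wsmooth`. -/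
def smoothCost (γ : ℝ) (M T : Matrix (Fin n) (Fin s) ℝ) : ℝ :=
  frob T M - γ * entropy T

theorem continuous_smoothCost (γ : ℝ) (M : Matrix (Fin n) (Fin s) ℝ) :
    Continuous (smoothCost γ M) := by
  unfold smoothCost frob
  simp only [entropy_eq_sum_negMulLog]
  fun_prop

theorem convexOn_smoothCost {γ : ℝ} (hγ : 0 ≤ γ) (M : Matrix (Fin n) (Fin s) ℝ) :
    ConvexOn ℝ {T : Matrix (Fin n) (Fin s) ℝ | ∀ i j, 0 ≤ T i j} (smoothCost γ M) := by
  have hfrob : ConvexOn ℝ {T : Matrix (Fin n) (Fin s) ℝ | ∀ i j, 0 ≤ T i j} fun T => frob T M :=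
    ⟨concaveOn_entropy.1, fun T _ P _ a b _ _ _ => by simp [frob_add, frob_smul]⟩
  exact hfrob.sub (concaveOn_entropy.smul hγ)

theorem pos_of_isMinOn_smoothCost {γ : ℝ} (hγ : 0 < γ) {M : Matrix (Fin n) (Fin s) ℝ}
    {S : Set (Matrix (Fin n) (Fin s) ℝ)} (hS : Convex ℝ S) (hS₀ : ∀ T ∈ S, ∀ i j, 0 ≤ T i j)
    {T P : Matrix (Fin n) (Fin s) ℝ} (hT : T ∈ S) (hmin : IsMinOn (smoothCost γ M) S T)
    (hP : P ∈ S) {i : Fin n} {j : Fin s} (hPij : 0 < P i j) : 0 < T i j := by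
  refine (hS₀ T hT i j).lt_of_ne' fun hij => ?_
  have hslope : ∀ t ∈ Set.Ioo (0 : ℝ) 1,
      smoothCost γ M T - smoothCost γ M P ≤ γ * P i j * Real.log t := by
    rintro t ⟨ht₀, ht₁⟩
    have hle : smoothCost γ M T ≤ smoothCost γ M ((1 - t) • T + t • P) :=
      hmin (hS hT hP (sub_nonneg.2 ht₁.le) ht₀.le (sub_add_cancel 1 t))
    have hent := mul_le_mul_of_nonneg_left
      (le_entropy_of_apply_eq_zero (hS₀ T hT) (hS₀ P hP) hij ht₀.le ht₁.le) hγ.le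
    refine le_of_mul_le_mul_left ?_ ht₀
    simp only [smoothCost, frob_add, frob_smul, Real.negMulLog] at hle hent ⊢
    linarith
  have hlim : Tendsto (fun t => γ * P i j * Real.log t) (𝓝[>] 0) atBot :=
    Real.tendsto_log_nhdsGT_zero.const_mul_atBot (mul_pos hγ hPij)
  obtain ⟨t, hlt, ht⟩ := ((hlim.eventually_lt_atBot (smoothCost γ M T - smoothCost γ M P)).and
    (Ioo_mem_nhdsGT one_pos)).exists
  exact hlt.not_ge (hslope t ht)

theorem differentiableAt_smoothCost_add_vecMulVec (γ : ℝ) (M : Matrix (Fin n) (Fin s) ℝ)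
    {T : Matrix (Fin n) (Fin s) ℝ} {w : Fin n → ℝ} (hT : ∀ i j, w i ≠ 0 → T i j ≠ 0)
    (q : Fin s → ℝ) :
    DifferentiableAt ℝ (fun x => smoothCost γ M (T + vecMulVec w (x - q))) q := by
  have hentry (i : Fin n) (j : Fin s) : DifferentiableAt ℝ
      (fun x : Fin s → ℝ => Real.negMulLog (T i j + w i * (x j - q j))) q := by
    by_cases hw : w i = 0
    · simp [hw]
    · refine DifferentiableAt.comp q (Real.differentiableAt_negMulLog ?_) (by fun_prop)
      simpa using hT i j hw
  simp only [smoothCost, frob, entropy_eq_sum_negMulLog, Matrix.add_apply, vecMulVec_apply,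
    Pi.sub_apply]
  fun_prop

section TransportPolytope

variable {p : Fin n → ℝ} {q : Fin s → ℝ}

theorem smul_add_smul_mem_transportPolytope {p₁ p₂ : Fin n → ℝ} {q₁ q₂ : Fin s → ℝ}
    {T₁ T₂ : Matrix (Fin n) (Fin s) ℝ} (h₁ : T₁ ∈ transportPolytope p₁ q₁)
    (h₂ : T₂ ∈ transportPolytope p₂ q₂) {a b : ℝ} (ha : 0 ≤ a) (hb : 0 ≤ b) :
    a • T₁ + b • T₂ ∈ transportPolytope (a • p₁ + b • p₂) (a • q₁ + b • q₂) := by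
  refine ⟨fun i j => add_nonneg (mul_nonneg ha (h₁.1 i j)) (mul_nonneg hb (h₂.1 i j)),
    fun i => ?_, fun j => ?_⟩
  · simp [sum_add_distrib, ← mul_sum, h₁.2.1, h₂.2.1]
  · simp [sum_add_distrib, ← mul_sum, h₁.2.2, h₂.2.2]

theorem convex_graph_transportPolytope (p : Fin n → ℝ) :
    Convex ℝ {z : (Fin s → ℝ) × Matrix (Fin n) (Fin s) ℝ | z.2 ∈ transportPolytope p z.1} := by
  intro z hz z' hz' a b ha hb hab
  simpa [← add_smul, hab] using smul_add_smul_mem_transportPolytope hz hz' ha hb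

theorem convex_transportPolytope (p : Fin n → ℝ) (q : Fin s → ℝ) :
    Convex ℝ (transportPolytope p q) := by
  intro T hT P hP a b ha hb hab
  simpa [← add_smul, hab] using smul_add_smul_mem_transportPolytope hT hP ha hb

theorem isClosed_transportPolytope (p : Fin n → ℝ) (q : Fin s → ℝ) :
    IsClosed (transportPolytope p q) := by
  simp only [transportPolytope, Set.ofPred_and, Set.ofPred_forall]
  refine .inter ?_ (.inter ?_ ?_)
  · exact isClosed_iInter fun i => isClosed_iInter fun j =>
      isClosed_le (by fun_prop) (by fun_prop)
  · exact isClosed_iInter fun i => isClosed_eq (by fun_prop) (by fun_prop)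
  · exact isClosed_iInter fun j => isClosed_eq (by fun_prop) (by fun_prop)

theorem isCompact_transportPolytope (p : Fin n → ℝ) (q : Fin s → ℝ) :
    IsCompact (transportPolytope p q) := by
  have hbox : IsCompact (Set.univ.pi fun i => Set.univ.pi fun _ => Set.Icc 0 (p i) :
      Set (Matrix (Fin n) (Fin s) ℝ)) :=
    isCompact_univ_pi fun _ => isCompact_univ_pi fun _ => isCompact_Icc
  refine hbox.of_isClosed_subset (isClosed_transportPolytope p q) ?_
  rintro T ⟨hT, hrow, -⟩ i - j -
  exact ⟨hT i j, hrow i ▸ single_le_sum (fun j _ => hT i j) (mem_univ j)⟩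

theorem vecMulVec_mem_transportPolytope (hp : p ∈ simplex n) (hq : q ∈ simplex s) :
    vecMulVec p q ∈ transportPolytope p q := by
  refine ⟨fun i j => mul_nonneg (hp.1 i) (hq.1 j), fun i => ?_, fun j => ?_⟩
  · simp [vecMulVec_apply, ← mul_sum, hq.2]
  · simp [vecMulVec_apply, ← sum_mul, hp.2]

theorem eventually_add_vecMulVec_mem_transportPolytope {T : Matrix (Fin n) (Fin s) ℝ}
    (hT : T ∈ transportPolytope p q) {w : Fin n → ℝ} (hw : ∑ i, w i = 1)
    (hpos : ∀ i j, w i ≠ 0 → 0 < T i j) :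
    ∀ᶠ x in 𝓝[{x | ∑ j, x j = ∑ j, q j}] q,
      T + vecMulVec w (x - q) ∈ transportPolytope p x := by
  have hnonneg : ∀ᶠ x in 𝓝 q, ∀ i j, 0 ≤ T i j + w i * (x j - q j) := by
    refine eventually_all.2 fun i => eventually_all.2 fun j => ?_
    by_cases hwi : w i = 0
    · simp [hwi, hT.1 i j]
    · have hcont : ContinuousAt (fun x : Fin s → ℝ => T i j + w i * (x j - q j)) q :=
        Continuous.continuousAt (by fun_prop)
      exact (hcont.eventually_const_lt (by simpa using hpos i j hwi)).mono fun _ => le_of_lt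
  filter_upwards [nhdsWithin_le_nhds hnonneg, self_mem_nhdsWithin] with x hx hsum
  refine ⟨hx, fun i => ?_, fun j => ?_⟩
  · simp [vecMulVec_apply, sum_add_distrib, ← mul_sum, hT.2.1, Set.mem_ofPred.1 hsum]
  · simp [vecMulVec_apply, sum_add_distrib, ← sum_mul, hT.2.2, hw]

end TransportPolytope

section Wsmooth

variable (γ : ℝ) (M : Matrix (Fin n) (Fin s) ℝ) (p : Fin n → ℝ) (q : Fin s → ℝ)

theorem bddBelow_smoothCost_image_transportPolytope :
    BddBelow (smoothCost γ M '' transportPolytope p q) :=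
  (isCompact_transportPolytope p q).bddBelow_image (continuous_smoothCost γ M).continuousOn

variable {p q} in
theorem wsmooth_le_smoothCost {T : Matrix (Fin n) (Fin s) ℝ} (hT : T ∈ transportPolytope p q) :
    Wsmooth γ M p q ≤ smoothCost γ M T :=
  csInf_le (bddBelow_smoothCost_image_transportPolytope γ M p q) ⟨T, hT, rfl⟩

variable {p q} in
theorem exists_isMinOn_smoothCost_eq_wsmooth (h : (transportPolytope p q).Nonempty) :
    ∃ T ∈ transportPolytope p q, IsMinOn (smoothCost γ M) (transportPolytope p q) T ∧
      Wsmooth γ M p q = smoothCost γ M T := by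
  obtain ⟨T, hT, heq, hmin⟩ := (isCompact_transportPolytope p q).exists_sInf_image_eq_and_le h
    (continuous_smoothCost γ M).continuousOn
  exact ⟨T, hT, hmin, heq⟩

variable {γ} in
theorem convexOn_wsmooth (hγ : 0 ≤ γ) :
    ConvexOn ℝ {q | (transportPolytope p q).Nonempty} (Wsmooth γ M p) :=
  convexOn_sInf_image (convexOn_smoothCost hγ M) (convex_graph_transportPolytope p)
    (fun _ _ hT => hT.1) (bddBelow_smoothCost_image_transportPolytope γ M p)

end Wsmooth

theorem wassersteinSmooth_differentiableWithinAt_general {γ : ℝ} (hγ : 0 < γ)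
    (M : Matrix (Fin n) (Fin s) ℝ) {p : Fin n → ℝ} (hp : p ∈ simplex n)
    {q : Fin s → ℝ} (hq : q ∈ simplex s) (hq' : ∀ j, 0 < q j) :
    DifferentiableWithinAt ℝ (Wsmooth γ M p) {x : Fin s → ℝ | ∑ j, x j = 1} q := by
  have hprod := vecMulVec_mem_transportPolytope hp hq
  obtain ⟨T, hT, hmin, hTq⟩ := exists_isMinOn_smoothCost_eq_wsmooth γ M ⟨_, hprod⟩
  have hpos (i : Fin n) (j : Fin s) (hi : p i ≠ 0) : 0 < T i j :=
    pos_of_isMinOn_smoothCost hγ (convex_transportPolytope p q) (fun _ hP => hP.1) hT hmin hprod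
      (mul_pos ((hp.1 i).lt_of_ne' hi) (hq' j))
  have hplan := eventually_add_vecMulVec_mem_transportPolytope hT hp.2 hpos
  rw [hq.2] at hplan
  have hplan_q : T + vecMulVec p (q - q) = T := by
    ext i j
    simp [vecMulVec_apply]
  have hreflect : Set.MapsTo (Equiv.pointReflection q)
      {x : Fin s → ℝ | ∑ j, x j = 1} {x | ∑ j, x j = 1} := fun x hx => by
    simp [Equiv.pointReflection_apply, sum_add_distrib, hq.2, Set.mem_ofPred.1 hx]
  have hdiff := differentiableAt_smoothCost_add_vecMulVec γ M (fun i j hi => (hpos i j hi).ne') q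
  exact (hasFDerivWithinAt_of_convexOn_of_eventuallyLE (convexOn_wsmooth M p hγ.le)
    (hplan.mono fun _ h => ⟨_, h⟩) hreflect hdiff.hasFDerivAt.hasFDerivWithinAt
    (hplan.mono fun _ => wsmooth_le_smoothCost γ M) (by rw [hplan_q, hTq])).differentiableWithinAt

/-- for γ > 0 and p with positive entries, q ↦ W_γ(p,q) is differentiable
along the affine hull {x : Σ_j x_j = 1} of the simplex at every q in the relative
interior of Σ_s (i.e. q ∈ Σ_s with strictly positive entries). -/
theorem wassersteinSmooth_differentiableWithinAt
    (n s : ℕ) (hn : 0 < n) (hs : 0 < s)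
    (γ : ℝ) (hγ : 0 < γ)
    (M : Matrix (Fin n) (Fin s) ℝ) (hM : ∀ i j, 0 ≤ M i j)
    (p : Fin n → ℝ) (hp : p ∈ simplex n) (hp' : ∀ i, 0 < p i)
    (q : Fin s → ℝ) (hq : q ∈ simplex s) (hq' : ∀ j, 0 < q j) :
    DifferentiableWithinAt ℝ (fun q' => Wsmooth γ M p q')
      {x : Fin s → ℝ | ∑ j, x j = 1} q :=
  wassersteinSmooth_differentiableWithinAt_general hγ M hp hq hq'
end
end
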